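/- Let A be a real m×n matrix with AᵀA positive definite and R a real symmetric positive semidefinite n×n matrix, and suppose M := R(AᵀA + R)⁻¹ is symmetric. Let λ_min and λ_max denote the minimum and maximum eigenvalues of M (so 0 ≤ λ_min ≤ λ_max < 1). Then for every k ∈ ℕ the residual F := ∑_{i=k+1}^∞ Mⁱ converges and satisfies the Loewner-order bounds (1/(1 − λ_min))·M^{k+1} ⪯ F ⪯ (1/(1 − λ_max))·M^{k+1}. -/

import Mathlib

open Matrix

/-!
Put `S = P + R` with `P` positive definite. Then `λ - R S⁻¹ = (λ S - R) S⁻¹`, and `λ S - R` is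
negative definite for `λ < 0` and equal to `λ P + (λ - 1) R`, hence positive definite, for `1 ≤ λ`.
So the real spectrum of `M = R S⁻¹` lies in `[0, 1)`. By the functional calculus the tail of the
geometric series is `x ^ (k + 1) / (1 - x)` evaluated at `M`, and the Loewner bounds are the scalar
inequalities `1 / (1 - λ_min) ≤ 1 / (1 - x) ≤ 1 / (1 - λ_max)` on the spectrum.
-/

section FunctionalCalculus

variable {𝕜 A : Type*} {p : A → Prop} [RCLike 𝕜] [Ring A] [StarRing A] [TopologicalSpace A]
  [Algebra 𝕜 A] [ContinuousFunctionalCalculus 𝕜 A p]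

theorem cfc_const_mul_pow {a : A} (ha : p a) (c : 𝕜) (k : ℕ) :
    cfc (fun x => c * x ^ k) a = c • a ^ k := by
  rw [cfc_const_mul c (· ^ k) a, cfc_pow_id a k ha]

theorem continuousOn_inv_one_sub_mul_pow {s : Set 𝕜} (hs : 1 ∉ s) (k : ℕ) :
    ContinuousOn (fun x => (1 - x)⁻¹ * x ^ k) s := by
  have hne : ∀ x ∈ s, 1 - x ≠ 0 := fun x hx h => hs (sub_eq_zero.1 h ▸ hx)
  fun_prop (disch := assumption)

theorem hasSum_cfc {ι : Type*} {f : ι → 𝕜 → 𝕜} {u : ι → ℝ} {a : A} (hu : Summable u)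
    (hf : ∀ i, ContinuousOn (f i) (spectrum 𝕜 a))
    (hfu : ∀ i, ∀ x ∈ spectrum 𝕜 a, ‖f i x‖ ≤ u i) :
    HasSum (fun i => cfc (f i) a) (cfc (fun x => ∑' i, f i x) a) := by
  have htendsto := tendsto_cfc_fun (tendstoUniformlyOn_tsum hu hfu)
    (.of_forall fun s => continuousOn_finsetSum s fun i _ => hf i)
  refine htendsto.congr fun s => ?_
  rw [← cfc_sum f a s fun i _ => hf i, Finset.sum_fn]

theorem hasSum_pow_add_cfc {a : A} (ha : p a) (hlt : ∀ x ∈ spectrum 𝕜 a, ‖x‖ < 1) (k : ℕ) :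
    HasSum (fun i => a ^ (i + k)) (cfc (fun x : 𝕜 => (1 - x)⁻¹ * x ^ k) a) := by
  have hcompact : IsCompact (insert 0 (spectrum 𝕜 a)) :=
    (ContinuousFunctionalCalculus.isCompact_spectrum a).insert 0
  obtain ⟨y, hy, hmax⟩ :=
    hcompact.exists_isMaxOn (Set.insert_nonempty _ _) continuous_norm.continuousOn
  have hy_lt : ‖y‖ < 1 := by
    rcases hy with rfl | hy
    · simp
    · exact hlt y hy
  have hbound (i : ℕ) (x : 𝕜) (hx : x ∈ spectrum 𝕜 a) : ‖x ^ (i + k)‖ ≤ ‖y‖ ^ (i + k) := by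
    rw [norm_pow]
    exact pow_le_pow_left₀ (norm_nonneg x) (hmax (Set.mem_insert_of_mem _ hx)) _
  have hsummable : Summable fun i => ‖y‖ ^ (i + k) :=
    (summable_nat_add_iff k).2 (summable_geometric_of_lt_one (norm_nonneg y) hy_lt)
  have hsum := hasSum_cfc hsummable (fun i => (continuous_pow (i + k)).continuousOn) hbound
  have htsum : (spectrum 𝕜 a).EqOn (fun x => ∑' i, x ^ (i + k)) (fun x => (1 - x)⁻¹ * x ^ k) := by
    intro x hx
    simp only [pow_add, tsum_mul_right, tsum_geometric_of_norm_lt_one (hlt x hx)]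
  simpa only [cfc_pow_id a _ ha, cfc_congr htsum] using hsum

end FunctionalCalculus

section LoewnerOrder

variable {A : Type*} [Ring A] [StarRing A] [TopologicalSpace A] [Algebra ℝ A]
  [ContinuousFunctionalCalculus ℝ A IsSelfAdjoint] {a : A} {c : ℝ}

theorem hasSum_pow_add_cfc_of_spectrum_subset_Ico (ha : IsSelfAdjoint a)
    (hspec : spectrum ℝ a ⊆ Set.Ico 0 1) (k : ℕ) :
    HasSum (fun i => a ^ (i + k)) (cfc (fun x : ℝ => (1 - x)⁻¹ * x ^ k) a) :=
  hasSum_pow_add_cfc ha (fun x hx => by simpa [abs_of_nonneg (hspec hx).1] using (hspec hx).2) k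

variable [T2Space A] [PartialOrder A] [StarOrderedRing A]

theorem smul_pow_le_tsum_pow_add (ha : IsSelfAdjoint a) (hspec : spectrum ℝ a ⊆ Set.Ico 0 1)
    (hc : ∀ x ∈ spectrum ℝ a, c ≤ x) (k : ℕ) :
    (1 - c)⁻¹ • a ^ k ≤ ∑' i, a ^ (i + k) := by
  have hone : (1 : ℝ) ∉ spectrum ℝ a := fun h => (hspec h).2.false
  rw [(hasSum_pow_add_cfc_of_spectrum_subset_Ico ha hspec k).tsum_eq, ← cfc_const_mul_pow ha]
  refine cfc_mono (fun x hx => ?_) (by fun_prop) (continuousOn_inv_one_sub_mul_pow hone k)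
  obtain ⟨hx_nonneg, hx_lt⟩ := hspec hx
  have hinv : (1 - c)⁻¹ ≤ (1 - x)⁻¹ :=
    inv_anti₀ (sub_pos.2 hx_lt) (sub_le_sub_left (hc x hx) 1)
  exact mul_le_mul_of_nonneg_right hinv (pow_nonneg hx_nonneg k)

theorem tsum_pow_add_le_smul_pow (ha : IsSelfAdjoint a) (hspec : spectrum ℝ a ⊆ Set.Ico 0 1)
    (hc : ∀ x ∈ spectrum ℝ a, x ≤ c) (hc_lt : c < 1) (k : ℕ) :
    ∑' i, a ^ (i + k) ≤ (1 - c)⁻¹ • a ^ k := by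
  have hone : (1 : ℝ) ∉ spectrum ℝ a := fun h => (hspec h).2.false
  rw [(hasSum_pow_add_cfc_of_spectrum_subset_Ico ha hspec k).tsum_eq, ← cfc_const_mul_pow ha]
  refine cfc_mono (fun x hx => ?_) (continuousOn_inv_one_sub_mul_pow hone k) (by fun_prop)
  have hinv : (1 - x)⁻¹ ≤ (1 - c)⁻¹ :=
    inv_anti₀ (sub_pos.2 hc_lt) (sub_le_sub_left (hc x hx) 1)
  exact mul_le_mul_of_nonneg_right hinv (pow_nonneg (hspec hx).1 k)

end LoewnerOrder

section Matrix

variable {ι 𝕜 : Type*} [Fintype ι] [DecidableEq ι] [RCLike 𝕜] {P R M : Matrix ι ι 𝕜}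

open scoped ComplexOrder in
theorem spectrum_mul_inv_add_subset_Ico (hP : P.PosDef) (hR : R.PosSemidef) :
    spectrum ℝ (R * (P + R)⁻¹) ⊆ Set.Ico 0 1 := by
  have hS : (P + R).PosDef := hP.add_posSemidef hR
  intro t ht
  have hsingular : ¬ IsUnit (t • (P + R) - R) := by
    have hfactor : (algebraMap ℝ _ t - R * (P + R)⁻¹) * (P + R) = t • (P + R) - R := by
      rw [sub_mul, ← Algebra.smul_def,
        nonsing_inv_mul_cancel_right _ _ ((isUnit_iff_isUnit_det _).1 hS.isUnit)]
    rwa [← hfactor, hS.isUnit.mul_right_iff]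
  constructor
  · by_contra! hneg
    have hpos : ((-t) • (P + R) + R).PosDef := (hS.smul (neg_pos.2 hneg)).add_posSemidef hR
    apply hsingular
    simpa [neg_add_eq_sub] using hpos.isUnit.neg
  · by_contra! hone
    have hpos : (t • P + (t - 1) • R).PosDef :=
      (hP.smul (zero_lt_one.trans_le hone)).add_posSemidef (hR.smul (sub_nonneg.2 hone))
    apply hsingular
    convert hpos.isUnit using 1
    module

open scoped ComplexOrder MatrixOrder in
theorem stmt_7_general [Nonempty ι] (hP : P.PosDef) (hR : R.PosSemidef)
    (hM : M = R * (P + R)⁻¹) (hsym : M.IsHermitian) (k : ℕ) :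
    Summable (fun i : ℕ => M ^ (i + (k + 1))) ∧
    ((∑' i : ℕ, M ^ (i + (k + 1))) -
        (1 / (1 - ⨅ i, hsym.eigenvalues i)) • M ^ (k + 1)).PosSemidef ∧
    ((1 / (1 - ⨆ i, hsym.eigenvalues i)) • M ^ (k + 1) -
        ∑' i : ℕ, M ^ (i + (k + 1))).PosSemidef := by
  have hspec : spectrum ℝ M ⊆ Set.Ico 0 1 := hM ▸ spectrum_mul_inv_add_subset_Ico hP hR
  have hrange := hsym.spectrum_real_eq_range_eigenvalues
  have hfinite := Set.finite_range hsym.eigenvalues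
  have hinf : ∀ x ∈ spectrum ℝ M, ⨅ i, hsym.eigenvalues i ≤ x :=
    fun x hx => csInf_le hfinite.bddBelow (hrange ▸ hx)
  have hsup : ∀ x ∈ spectrum ℝ M, x ≤ ⨆ i, hsym.eigenvalues i :=
    fun x hx => le_csSup hfinite.bddAbove (hrange ▸ hx)
  have hsup_lt : ⨆ i, hsym.eigenvalues i < 1 := by
    obtain ⟨j, hj⟩ := exists_eq_ciSup_of_finite (f := hsym.eigenvalues)
    exact hj ▸ (hspec (hsym.eigenvalues_mem_spectrum_real j)).2
  simp only [one_div]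
  exact ⟨(hasSum_pow_add_cfc_of_spectrum_subset_Ico hsym.isSelfAdjoint hspec (k + 1)).summable,
    smul_pow_le_tsum_pow_add hsym.isSelfAdjoint hspec hinf (k + 1),
    tsum_pow_add_le_smul_pow hsym.isSelfAdjoint hspec hsup hsup_lt (k + 1)⟩

end Matrix

/-- For `AᵀA` SPD, `R` PSD and `M := R(AᵀA + R)⁻¹` symmetric, the residual
`F := ∑_{i=k+1}^∞ Mⁱ` converges and satisfies the Loewner bounds
`(1/(1 − λ_min)) M^{k+1} ⪯ F ⪯ (1/(1 − λ_max)) M^{k+1}`. -/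
theorem stmt_7 {m n : ℕ} (hn : 0 < n) (A : Matrix (Fin m) (Fin n) ℝ)
    (R : Matrix (Fin n) (Fin n) ℝ) (hA : (Aᵀ * A).PosDef) (hR : R.PosSemidef)
    (M : Matrix (Fin n) (Fin n) ℝ) (hM : M = R * (Aᵀ * A + R)⁻¹)
    (hsym : M.IsHermitian) (k : ℕ) :
    Summable (fun i : ℕ => M ^ (i + (k + 1))) ∧
    ((∑' i : ℕ, M ^ (i + (k + 1))) -
        (1 / (1 - ⨅ i, hsym.eigenvalues i)) • M ^ (k + 1)).PosSemidef ∧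
    ((1 / (1 - ⨆ i, hsym.eigenvalues i)) • M ^ (k + 1) -
        ∑' i : ℕ, M ^ (i + (k + 1))).PosSemidef := by
  have : Nonempty (Fin n) := ⟨⟨0, hn⟩⟩
  exact stmt_7_general hA hR hM hsym k
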